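/- Let $\mathbb R_{\max}=\mathbb R\cup\{-\infty\}$, and for a matrix $M\in\mathbb R_{\max}^{d\times d}$ and a vector $v\in\mathbb R_{\max}^d$ let $(M\otimes v)_i=\max_j(M_{ij}+v_j)$. Let $(A(n))_{n\in\mathbb Z}$ be a stationary and ergodic sequence of random $d\times d$ matrices with entries in $\mathbb R_{\max}$, almost surely having at least one finite entry on each row, such that every coordinate of $A(0)\otimes 0$ is integrable, where $0$ is the zero vector. For $n\ge 1$ put $$x(n,0)=A(n-1)\otimes\cdots\otimes A(0)\otimes 0,\qquad y(n,0)=A(-1)\otimes\cdots\otimes A(-n)\otimes 0,$$ and let $\gamma(A)$ be the almost-sure limit of $\frac1n\max_i x_i(n,0)$. Then $\frac1n x(n,0)$ converges almost surely to $\gamma(A)\mathbf 1$ if and only if $\frac1n y(n,0)$ converges almost surely to $\gamma(A)\mathbf 1$, where $\mathbf 1$ is the all-ones vector. -/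

import Mathlib

open Filter MeasureTheory Topology

noncomputable section

/-- Max-plus action of a matrix on a vector: `(A ⊗ v) i = max_j (A i j + v j)`.
The semiring `ℝ_max = ℝ ∪ {-∞}` is realised inside `EReal`, as the elements different from `⊤`;
the supremum is over the finite set of indices, hence a maximum (and `⊥ = -∞` if `d = 0`). -/
def mpVec {d : ℕ} (A : Fin d → Fin d → EReal) (v : Fin d → EReal) : Fin d → EReal :=
  fun i => ⨆ j, A i j + v j

/-- `mpProdVec a m n v = a (m + n - 1) ⊗ ⋯ ⊗ a (m + 1) ⊗ a m ⊗ v` (a product of `n` matrices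
applied to `v`). -/
def mpProdVec {d : ℕ} (a : ℤ → Fin d → Fin d → EReal) (m : ℤ) :
    ℕ → (Fin d → EReal) → Fin d → EReal
  | 0, v => v
  | n + 1, v => mpVec (a (m + n)) (mpProdVec a m n v)

/-- `x(n, 0) = a (n - 1) ⊗ ⋯ ⊗ a 0 ⊗ 0`. -/
def xVec {d : ℕ} (a : ℤ → Fin d → Fin d → EReal) (n : ℕ) : Fin d → EReal :=
  mpProdVec a 0 n 0

/-- `y(n, 0) = a (-1) ⊗ ⋯ ⊗ a (-n) ⊗ 0`. -/
def yVec {d : ℕ} (a : ℤ → Fin d → Fin d → EReal) (n : ℕ) : Fin d → EReal :=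
  mpProdVec a (-(n : ℤ)) n 0

/-- The shift on two-sided sequences. -/
def seqShift {E : Type*} (a : ℤ → E) : ℤ → E := fun n => a (n + 1)

/-- A two-sided sequence `(A n)` of random variables is stationary and ergodic: its law on the
space of sequences (with the product σ-algebra) is invariant and ergodic under the shift. -/
structure IsStationaryErgodic {Ω E : Type*} [MeasurableSpace Ω] [MeasurableSpace E]
    (A : ℤ → Ω → E) (μ : Measure Ω) : Prop where
  measurable : ∀ n, Measurable (A n)
  ergodic : Ergodic (seqShift (E := E)) (μ.map fun ω n => A n ω)

end

theorem ae_bddAbove_range_of_subadditive {α : Type*} [MeasurableSpace α] {μ : Measure α}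
    [IsProbabilityMeasure μ] {T : α → α} (hT : Ergodic T μ) {g : ℕ → α → ℝ}
    (hg0 : ∀ x, g 0 x = 0) (hgm : ∀ n, Measurable (g n)) (hgi : ∀ n, Integrable (g n) μ)
    (hsub : ∀ᵐ x ∂μ, ∀ m n, g (m + n) x ≤ g m x + g n (T^[m] x))
    {N : ℕ} (hN : ∫ x, g N x ∂μ < 0) :
    ∀ᵐ x ∂μ, BddAbove (Set.range fun n => g n x) := by
  set S : Set α := {x | BddAbove (Set.range fun n => g n x)} with hS
  have hSm : MeasurableSet S := measurableSet_bddAbove_range hgm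
  have hle : T ⁻¹' S ≤ᵐ[μ] S := by
    filter_upwards [hsub] with x hx hxS
    obtain ⟨C, hC⟩ := (hxS : BddAbove (Set.range fun n => g n (T x)))
    refine ⟨max 0 (g 1 x + C), ?_⟩
    rintro _ ⟨n, rfl⟩
    rcases n with _ | n
    · simp [hg0]
    · have h1 := hx 1 n
      have h2 : g n (T x) ≤ C := hC ⟨n, rfl⟩
      simp only [Function.iterate_one, add_comm 1 n] at h1
      exact le_max_of_le_right (by linarith)
  rcases hT.ae_empty_or_univ_of_preimage_ae_le hSm.nullMeasurableSet hle with h | h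
  swap
  · exact eventuallyEq_univ.1 h
  exfalso
  have hnot : ∀ᵐ x ∂μ, x ∉ S := by
    filter_upwards [h] with x hx hxS
    exact (hx.mp hxS : x ∈ (∅ : Set α))
  have hTN : MeasurePreserving T^[N] μ μ := hT.toMeasurePreserving.iterate N
  have hnot' : ∀ᵐ x ∂μ, T^[N] x ∉ S := hTN.quasiMeasurePreserving.ae hnot
  set M : ℕ → α → ℝ := fun n => partialSups g n with hM
  have hMle : ∀ k n x, k ≤ n → g k x ≤ M n x := fun k n x hk => le_partialSups_of_le g hk x
  have hMmono : ∀ m n x, m ≤ n → M m x ≤ M n x := fun m n x hk => (partialSups g).monotone hk x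
  have hMsup : ∀ n x c, (∀ k ≤ n, g k x ≤ c) → M n x ≤ c := by
    intro n x c hc
    simp only [hM, Pi.partialSups_apply]
    exact partialSups_le _ _ _ hc
  have hM0 : ∀ n x, 0 ≤ M n x := fun n x => (hg0 x).symm.le.trans (hMle 0 n x (Nat.zero_le n))
  have hMi : ∀ n, Integrable (M n) μ := by
    intro n
    induction n with
    | zero => simpa [hM] using hgi 0
    | succ n ih =>
      have : M (n + 1) = M n ⊔ g (n + 1) := by simp [hM]
      rw [this]
      exact ih.sup (hgi _)
  have hMTi : ∀ n, Integrable (fun x => M n (T^[N] x)) μ := fun n =>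
    hTN.integrable_comp_of_integrable (hMi n)
  have hMT : ∀ n, ∫ x, M n (T^[N] x) ∂μ = ∫ x, M n x ∂μ := fun n => by
    have := integral_map (μ := μ) hTN.measurable.aemeasurable (f := M n)
      (by rw [hTN.map_eq]; exact (hMi n).aestronglyMeasurable)
    rw [hTN.map_eq] at this
    exact this.symm
  set F : ℕ → α → ℝ := fun n x => max (M N x - M n (T^[N] x)) (g N x) with hF
  have hFi : ∀ n, Integrable (F n) μ := fun n => ((hMi N).sub (hMTi n)).sup (hgi N)
  have hFle : ∀ᵐ x ∂μ, ∀ n, M (n + N) x - M n (T^[N] x) ≤ F n x := by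
    filter_upwards [hsub] with x hx n
    have : M (n + N) x ≤ F n x + M n (T^[N] x) := by
      refine hMsup _ _ _ fun k hk => ?_
      rcases le_total k N with h | h
      · have h1 := hMle k N x h
        have h2 : M N x - M n (T^[N] x) ≤ F n x := le_max_left _ _
        linarith
      · obtain ⟨l, rfl⟩ := Nat.exists_eq_add_of_le h
        have h1 := hx N l
        have h2 := hMle l n (T^[N] x) (by omega)
        have h3 : g N x ≤ F n x := le_max_right _ _
        linarith
    linarith
  have hFnonneg : ∀ n, 0 ≤ ∫ x, F n x ∂μ := by
    intro n
    have h1 : ∫ x, (M (n + N) x - M n (T^[N] x)) ∂μ ≤ ∫ x, F n x ∂μ :=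
      integral_mono_ae ((hMi _).sub (hMTi n)) (hFi n) (by
        filter_upwards [hFle] with x hx using hx n)
    rw [integral_sub (hMi _) (hMTi n), hMT] at h1
    have h2 : ∫ x, M n x ∂μ ≤ ∫ x, M (n + N) x ∂μ :=
      integral_mono (hMi _) (hMi _) fun x => hMmono _ _ _ (Nat.le_add_right _ _)
    linarith
  have hlim : Tendsto (fun n => ∫ x, F n x ∂μ) atTop (𝓝 (∫ x, g N x ∂μ)) := by
    refine tendsto_integral_of_dominated_convergence (fun x => M N x + |g N x|)
      (fun n => (hFi n).aestronglyMeasurable) ((hMi N).add (hgi N).abs) ?_ ?_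
    · intro n
      refine Eventually.of_forall fun x => ?_
      have h1 := hM0 N x
      have h2 := hM0 n (T^[N] x)
      rw [Real.norm_eq_abs, abs_le]
      constructor
      · have : g N x ≤ F n x := le_max_right _ _
        have := neg_abs_le (g N x)
        linarith
      · have := le_abs_self (g N x)
        have := abs_nonneg (g N x)
        exact max_le (by linarith) (by linarith)
    · filter_upwards [hnot'] with x hx
      have : ∃ k, M N x - g N x < g k (T^[N] x) := by
        by_contra! hcon
        exact hx ⟨_, by rintro _ ⟨k, rfl⟩; exact hcon k⟩
      obtain ⟨k, hk⟩ := this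
      refine tendsto_const_nhds.congr' ?_
      filter_upwards [eventually_ge_atTop k] with n hn
      have := hMle k n (T^[N] x) hn
      exact (max_eq_right (by linarith)).symm
  exact absurd (ge_of_tendsto' hlim hFnonneg) (not_le.2 hN)

theorem ae_exists_forall_le_of_subadditive {α : Type*} [MeasurableSpace α] {μ : Measure α}
    [IsProbabilityMeasure μ] {T : α → α} (hT : Ergodic T μ) {g : ℕ → α → ℝ}
    (hg0 : ∀ x, g 0 x = 0) (hgm : ∀ n, Measurable (g n)) (hgi : ∀ n, Integrable (g n) μ)
    (hsub : ∀ᵐ x ∂μ, ∀ m n, g (m + n) x ≤ g m x + g n (T^[m] x))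
    {N : ℕ} {c : ℝ} (hN : ∫ x, g N x ∂μ < N * c) :
    ∀ᵐ x ∂μ, ∃ C, ∀ n, g n x ≤ n * c + C := by
  have := ae_bddAbove_range_of_subadditive hT (g := fun n x => g n x - n * c)
    (by simp [hg0]) (fun n => (hgm n).sub_const _) (fun n => (hgi n).sub (integrable_const _))
    (by
      filter_upwards [hsub] with x hx m n
      have := hx m n
      push_cast
      linarith) (N := N) (by
      rw [integral_sub (hgi N) (integrable_const _)]
      simpa using hN)
  filter_upwards [this] with x ⟨C, hC⟩
  refine ⟨C, fun n => ?_⟩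
  have : g n x - n * c ≤ C := hC ⟨n, rfl⟩
  linarith

theorem integrable_birkhoffSum {α : Type*} [MeasurableSpace α] {μ : Measure α}
    {T : α → α} (hT : MeasurePreserving T μ μ) {h : α → ℝ} (hi : Integrable h μ) (n : ℕ) :
    Integrable (birkhoffSum T h n) μ :=
  integrable_finsetSum _ fun k _ => (hT.iterate k).integrable_comp_of_integrable hi

theorem integral_birkhoffSum {α : Type*} [MeasurableSpace α] {μ : Measure α}
    {T : α → α} (hT : MeasurePreserving T μ μ) {h : α → ℝ} (hi : Integrable h μ) (n : ℕ) :
    ∫ x, birkhoffSum T h n x ∂μ = n * ∫ x, h x ∂μ := by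
  have key : ∀ k, ∫ x, h (T^[k] x) ∂μ = ∫ x, h x ∂μ := fun k => by
    have hk := hT.iterate k
    have := integral_map (μ := μ) hk.measurable.aemeasurable (f := h)
      (by rw [hk.map_eq]; exact hi.aestronglyMeasurable)
    rw [hk.map_eq] at this
    exact this.symm
  unfold birkhoffSum
  have := integral_finsetSum (μ := μ) (Finset.range n) (f := fun k x => h (T^[k] x))
    fun k _ => (hT.iterate k).integrable_comp_of_integrable hi
  rw [this]
  simp [key]

theorem measurable_birkhoffSum {α : Type*} [MeasurableSpace α]
    {T : α → α} (hT : Measurable T) {h : α → ℝ} (hm : Measurable h) (n : ℕ) :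
    Measurable (birkhoffSum T h n) :=
  Finset.measurable_fun_sum _ fun k _ => hm.comp (hT.iterate k)

theorem ae_exists_forall_birkhoffSum_le {α : Type*} [MeasurableSpace α] {μ : Measure α}
    [IsProbabilityMeasure μ] {T : α → α} (hT : Ergodic T μ) {h : α → ℝ}
    (hm : Measurable h) (hi : Integrable h μ) {c : ℝ} (hc : ∫ x, h x ∂μ < c) :
    ∀ᵐ x ∂μ, ∃ C, ∀ n : ℕ, birkhoffSum T h n x ≤ n * c + C := by
  refine ae_exists_forall_le_of_subadditive hT (birkhoffSum_zero T h)
    (measurable_birkhoffSum hT.measurable hm)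
    (integrable_birkhoffSum hT.toMeasurePreserving hi) ?_ (N := 1) (by simpa using hc)
  exact Eventually.of_forall fun x m n => (birkhoffSum_add T h m n x).le

theorem eventually_div_lt_of_forall_le {u : ℕ → ℝ} {c c' C : ℝ} (hc : c < c')
    (hu : ∀ n : ℕ, u n ≤ n * c + C) : ∀ᶠ n : ℕ in atTop, u n / n < c' := by
  have h : Tendsto (fun n : ℕ => C / (n : ℝ)) atTop (𝓝 0) := tendsto_const_div_atTop_nhds_zero_nat C
  filter_upwards [h.eventually_lt_const (sub_pos.2 hc), eventually_gt_atTop 0] with n hn hn0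
  have hn0' : (0 : ℝ) < n := by exact_mod_cast hn0
  rw [div_lt_iff₀ hn0'] at hn ⊢
  have := hu n
  nlinarith

/-- Birkhoff's pointwise ergodic theorem for ergodic transformations. -/
theorem ae_tendsto_birkhoffSum_div {α : Type*} [MeasurableSpace α] {μ : Measure α}
    [IsProbabilityMeasure μ] {T : α → α} (hT : Ergodic T μ) {h : α → ℝ}
    (hm : Measurable h) (hi : Integrable h μ) :
    ∀ᵐ x ∂μ, Tendsto (fun n : ℕ => birkhoffSum T h n x / n) atTop (𝓝 (∫ x, h x ∂μ)) := by
  have h1 : ∀ k : ℕ, ∀ᵐ x ∂μ, ∃ C, ∀ n : ℕ,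
      birkhoffSum T h n x ≤ n * (∫ x, h x ∂μ + 1 / ((k : ℝ) + 1)) + C := fun k =>
    ae_exists_forall_birkhoffSum_le hT hm hi (by linarith [Nat.one_div_pos_of_nat (α := ℝ) (n := k)])
  have h2 : ∀ k : ℕ, ∀ᵐ x ∂μ, ∃ C, ∀ n : ℕ,
      birkhoffSum T (-h) n x ≤ n * (-∫ x, h x ∂μ + 1 / ((k : ℝ) + 1)) + C := fun k =>
    ae_exists_forall_birkhoffSum_le hT hm.neg hi.neg (by
      simp only [Pi.neg_apply, integral_neg]
      linarith [Nat.one_div_pos_of_nat (α := ℝ) (n := k)])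
  filter_upwards [ae_all_iff.2 h1, ae_all_iff.2 h2] with x hx1 hx2
  rw [tendsto_order]
  constructor
  · intro a ha
    obtain ⟨k, hk⟩ := exists_nat_one_div_lt (sub_pos.2 ha)
    obtain ⟨C, hC⟩ := hx2 k
    filter_upwards [eventually_div_lt_of_forall_le (c' := -a) (by linarith) hC] with n hn
    have : birkhoffSum T (-h) n x = - birkhoffSum T h n x := birkhoffSum_neg T h n x
    rw [this, neg_div] at hn
    linarith
  · intro a ha
    obtain ⟨k, hk⟩ := exists_nat_one_div_lt (sub_pos.2 ha)
    obtain ⟨C, hC⟩ := hx1 k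
    exact eventually_div_lt_of_forall_le (by linarith) hC

theorem exists_integral_lt_of_tendsto_div {α : Type*} [MeasurableSpace α] {μ : Measure α}
    [IsProbabilityMeasure μ] {T : α → α} (hT : Ergodic T μ) {h : α → ℝ}
    (hm : Measurable h) (hi : Integrable h μ) {g : ℕ → α → ℝ} (hgi : ∀ n, Integrable (g n) μ)
    (hgh : ∀ᵐ x ∂μ, ∀ n, g n x ≤ birkhoffSum T h n x) {γ c : ℝ} (hc : γ < c)
    (hlim : ∀ᵐ x ∂μ, Tendsto (fun n : ℕ => g n x / n) atTop (𝓝 γ)) :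
    ∃ N : ℕ, ∫ x, g N x ∂μ < N * c := by
  set B : ℝ := ∫ x, h x ∂μ with hB
  set D : ℕ → α → ℝ := fun n x => birkhoffSum T h n x / n - g n x / n with hD
  set K : ℝ := max (B - γ) 0 with hK
  have hDi : ∀ n, Integrable (D n) μ := fun n =>
    ((integrable_birkhoffSum hT.toMeasurePreserving hi n).div_const _).sub ((hgi n).div_const _)
  have hmi : ∀ n, Integrable (fun x => min (D n x) K) μ := fun n =>
    (hDi n).inf (integrable_const K)
  have hD0 : ∀ᵐ x ∂μ, ∀ n, 0 ≤ D n x := by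
    filter_upwards [hgh] with x hx n
    rw [hD]
    simp only [← sub_div]
    exact div_nonneg (sub_nonneg.2 (hx n)) (Nat.cast_nonneg n)
  have hconv : Tendsto (fun n => ∫ x, min (D n x) K ∂μ) atTop (𝓝 (∫ _, (B - γ) ∂μ)) := by
    refine tendsto_integral_of_dominated_convergence (fun _ => K)
      (fun n => (hmi n).aestronglyMeasurable) (integrable_const K) ?_ ?_
    · intro n
      filter_upwards [hD0] with x hx
      rw [Real.norm_eq_abs, abs_of_nonneg (le_min (hx n) (le_max_right _ _))]
      exact min_le_right _ _
    · filter_upwards [hlim, ae_tendsto_birkhoffSum_div hT hm hi] with x hx1 hx2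
      have := (hx2.sub hx1).min (tendsto_const_nhds (x := K))
      rwa [min_eq_left (le_max_left _ _)] at this
  simp only [integral_const, probReal_univ, one_smul] at hconv
  obtain ⟨N, hN, hN0⟩ := ((hconv.eventually_const_lt (show B - c < B - γ by linarith)).and
    (eventually_gt_atTop 0)).exists
  have hN0' : (0 : ℝ) < N := by exact_mod_cast hN0
  refine ⟨N, ?_⟩
  have h1 : ∫ x, min (D N x) K ∂μ ≤ ∫ x, D N x ∂μ :=
    integral_mono (hmi N) (hDi N) fun x => min_le_left _ _
  have h2 : ∫ x, D N x ∂μ = B - (∫ x, g N x ∂μ) / N := by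
    simp only [hD]
    rw [integral_sub ((integrable_birkhoffSum hT.toMeasurePreserving hi N).div_const _)
      ((hgi N).div_const _), integral_div, integral_div,
      integral_birkhoffSum hT.toMeasurePreserving hi]
    rw [mul_div_cancel_left₀ _ hN0'.ne']
  have h3 : (∫ x, g N x ∂μ) / N < c := by linarith
  rw [div_lt_iff₀ hN0'] at h3
  linarith

/-- If `g` is subadditive over `T`, `g'` has the same expectations and is dominated by the Birkhoff
sums of an integrable function, and `g' n / n → γ`, then `limsup (g n / n) ≤ γ`. -/
theorem ae_forall_eventually_div_lt {α : Type*} [MeasurableSpace α] {μ : Measure α}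
    [IsProbabilityMeasure μ] {T T' : α → α} (hT : Ergodic T μ) (hT' : Ergodic T' μ)
    {g g' : ℕ → α → ℝ}
    (hg0 : ∀ x, g 0 x = 0) (hgm : ∀ n, Measurable (g n)) (hgi : ∀ n, Integrable (g n) μ)
    (hsub : ∀ᵐ x ∂μ, ∀ m n, g (m + n) x ≤ g m x + g n (T^[m] x))
    (hgi' : ∀ n, Integrable (g' n) μ) (heq : ∀ n, ∫ x, g n x ∂μ = ∫ x, g' n x ∂μ)
    {h : α → ℝ} (hm : Measurable h) (hi : Integrable h μ)
    (hgh : ∀ᵐ x ∂μ, ∀ n, g' n x ≤ birkhoffSum T' h n x) {γ : ℝ}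
    (hlim : ∀ᵐ x ∂μ, Tendsto (fun n : ℕ => g' n x / n) atTop (𝓝 γ)) :
    ∀ᵐ x ∂μ, ∀ c, γ < c → ∀ᶠ n : ℕ in atTop, g n x / n < c := by
  have h1 : ∀ k : ℕ, ∀ᵐ x ∂μ, ∃ C, ∀ n : ℕ, g n x ≤ n * (γ + 1 / ((k : ℝ) + 1)) + C := by
    intro k
    obtain ⟨N, hN⟩ := exists_integral_lt_of_tendsto_div hT' hm hi hgi' hgh
      (show γ < γ + 1 / ((k : ℝ) + 1) by linarith [Nat.one_div_pos_of_nat (α := ℝ) (n := k)]) hlim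
    exact ae_exists_forall_le_of_subadditive hT hg0 hgm hgi hsub ((heq N).trans_lt hN)
  filter_upwards [ae_all_iff.2 h1] with x hx c hc
  obtain ⟨k, hk⟩ := exists_nat_one_div_lt (sub_pos.2 hc)
  obtain ⟨C, hC⟩ := hx k
  exact eventually_div_lt_of_forall_le (by linarith) hC

noncomputable section

theorem mpVec_le_add {d : ℕ} (A : Fin d → Fin d → EReal) {v w : Fin d → EReal} {c : EReal}
    (h : ∀ j, v j ≤ c + w j) (i : Fin d) : mpVec A v i ≤ c + mpVec A w i := by
  refine iSup_le fun j => ?_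
  calc A i j + v j ≤ A i j + (c + w j) := by gcongr; exact h j
    _ = c + (A i j + w j) := add_left_comm _ _ _
    _ ≤ c + mpVec A w i := by gcongr; exact le_iSup (fun j => A i j + w j) j

theorem exists_mpVec_eq {d : ℕ} (A : Fin d → Fin d → EReal) (v : Fin d → EReal) (i : Fin d) :
    ∃ j, mpVec A v i = A i j + v j := by
  have : Nonempty (Fin d) := ⟨i⟩
  obtain ⟨j, hj⟩ := exists_eq_ciSup_of_finite (f := fun j => A i j + v j)
  exact ⟨j, hj.symm⟩

theorem add_le_mpVec {d : ℕ} (A : Fin d → Fin d → EReal) {v w : Fin d → EReal} {c : EReal}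
    (h : ∀ j, c + w j ≤ v j) (i : Fin d) : c + mpVec A w i ≤ mpVec A v i := by
  obtain ⟨j, hj⟩ := exists_mpVec_eq A w i
  calc c + mpVec A w i = A i j + (c + w j) := by rw [hj, add_left_comm]
    _ ≤ A i j + v j := by gcongr; exact h j
    _ ≤ mpVec A v i := le_iSup (fun j => A i j + v j) j

theorem mpProdVec_le_add {d : ℕ} (a : ℤ → Fin d → Fin d → EReal) (m : ℤ) (k : ℕ)
    {v : Fin d → EReal} {c : EReal} (h : ∀ j, v j ≤ c) (i : Fin d) :
    mpProdVec a m k v i ≤ c + mpProdVec a m k 0 i := by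
  induction k generalizing i with
  | zero => simpa [mpProdVec] using h i
  | succ k ih => exact mpVec_le_add _ ih i

theorem add_le_mpProdVec {d : ℕ} (a : ℤ → Fin d → Fin d → EReal) (m : ℤ) (k : ℕ)
    {v : Fin d → EReal} {c : EReal} (h : ∀ j, c ≤ v j) (i : Fin d) :
    c + mpProdVec a m k 0 i ≤ mpProdVec a m k v i := by
  induction k generalizing i with
  | zero => simpa [mpProdVec] using h i
  | succ k ih => exact add_le_mpVec _ ih i

theorem mpProdVec_add {d : ℕ} (a : ℤ → Fin d → Fin d → EReal) (m : ℤ) (n k : ℕ)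
    (v : Fin d → EReal) :
    mpProdVec a m (n + k) v = mpProdVec a (m + n) k (mpProdVec a m n v) := by
  induction k with
  | zero => rfl
  | succ k ih =>
    rw [← add_assoc, mpProdVec, mpProdVec, ih]
    congr 2
    push_cast
    ring

/-- All matrices of the sequence have entries in `ℝ_max` and a finite entry on each row. -/
def RowFinite {d : ℕ} (a : ℤ → Fin d → Fin d → EReal) : Prop :=
  ∀ n i, (∀ j, a n i j ≠ ⊤) ∧ ∃ j, a n i j ≠ ⊥

theorem RowFinite.mpProdVec_ne {d : ℕ} {a : ℤ → Fin d → Fin d → EReal} (ha : RowFinite a)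
    (m : ℤ) (n : ℕ) (i : Fin d) : mpProdVec a m n 0 i ≠ ⊤ ∧ mpProdVec a m n 0 i ≠ ⊥ := by
  induction n generalizing i with
  | zero => simp [mpProdVec]
  | succ n ih =>
    rw [mpProdVec]
    constructor
    · obtain ⟨j, hj⟩ := exists_mpVec_eq (a (m + n)) (mpProdVec a m n 0) i
      rw [hj]
      exact EReal.add_ne_top ((ha _ i).1 j) (ih j).1
    · obtain ⟨j, hj⟩ := (ha (m + n) i).2
      refine ne_bot_of_le_ne_bot (b := a (m + n) i j + mpProdVec a m n 0 j) ?_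
        (le_iSup (fun j => a (m + n) i j + mpProdVec a m n 0 j) j)
      exact EReal.add_ne_bot_iff.2 ⟨hj, (ih j).2⟩

/-- The largest coordinate of a vector, as a real number. -/
def maxCoord {d : ℕ} (v : Fin d → EReal) : ℝ := ⨆ i, (v i).toReal

/-- The opposite of the smallest coordinate of a vector, as a real number. -/
def negMinCoord {d : ℕ} (v : Fin d → EReal) : ℝ := ⨆ i, -(v i).toReal

theorem toReal_le_maxCoord {d : ℕ} (v : Fin d → EReal) (i : Fin d) :
    (v i).toReal ≤ maxCoord v :=
  le_ciSup (f := fun i => (v i).toReal) (Set.finite_range _).bddAbove i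

theorem neg_toReal_le_negMinCoord {d : ℕ} (v : Fin d → EReal) (i : Fin d) :
    -(v i).toReal ≤ negMinCoord v :=
  le_ciSup (f := fun i => -(v i).toReal) (Set.finite_range _).bddAbove i

theorem maxCoord_zero {d : ℕ} : maxCoord (0 : Fin d → EReal) = 0 := by
  simp [maxCoord]

theorem negMinCoord_zero {d : ℕ} : negMinCoord (0 : Fin d → EReal) = 0 := by
  simp [negMinCoord]

theorem measurable_maxCoord {d : ℕ} : Measurable (maxCoord (d := d)) :=
  Measurable.iSup fun i => (measurable_pi_apply i).ereal_toReal

theorem measurable_negMinCoord {d : ℕ} : Measurable (negMinCoord (d := d)) :=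
  Measurable.iSup fun i => (measurable_pi_apply i).ereal_toReal.neg

theorem RowFinite.maxCoord_add_le {d : ℕ} [NeZero d] {a : ℤ → Fin d → Fin d → EReal}
    (ha : RowFinite a) (m : ℤ) (n k : ℕ) :
    maxCoord (mpProdVec a m (n + k) 0) ≤
      maxCoord (mpProdVec a m n 0) + maxCoord (mpProdVec a (m + n) k 0) := by
  refine ciSup_le fun i => ?_
  have h := mpProdVec_le_add a (m + n) k (v := mpProdVec a m n 0)
    (c := (maxCoord (mpProdVec a m n 0) : EReal)) (fun j => by
      rw [← EReal.coe_toReal (ha.mpProdVec_ne m n j).1 (ha.mpProdVec_ne m n j).2]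
      exact_mod_cast toReal_le_maxCoord (mpProdVec a m n 0) j) i
  have h1 := ha.mpProdVec_ne (m + n) k i
  have h2 := ha.mpProdVec_ne m (n + k) i
  rw [← mpProdVec_add, ← EReal.coe_toReal h1.1 h1.2, ← EReal.coe_toReal h2.1 h2.2] at h
  have h' : (mpProdVec a m (n + k) 0 i).toReal ≤ maxCoord (mpProdVec a m n 0) +
    (mpProdVec a (m + n) k 0 i).toReal := by exact_mod_cast h
  linarith [toReal_le_maxCoord (mpProdVec a (m + n) k 0) i]

theorem RowFinite.negMinCoord_add_le {d : ℕ} [NeZero d] {a : ℤ → Fin d → Fin d → EReal}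
    (ha : RowFinite a) (m : ℤ) (n k : ℕ) :
    negMinCoord (mpProdVec a m (n + k) 0) ≤
      negMinCoord (mpProdVec a m n 0) + negMinCoord (mpProdVec a (m + n) k 0) := by
  refine ciSup_le fun i => ?_
  have h := add_le_mpProdVec a (m + n) k (v := mpProdVec a m n 0)
    (c := ((-negMinCoord (mpProdVec a m n 0) : ℝ) : EReal)) (fun j => by
      rw [← EReal.coe_toReal (ha.mpProdVec_ne m n j).1 (ha.mpProdVec_ne m n j).2]
      have := neg_toReal_le_negMinCoord (mpProdVec a m n 0) j
      exact_mod_cast (by linarith)) i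
  have h1 := ha.mpProdVec_ne (m + n) k i
  have h2 := ha.mpProdVec_ne m (n + k) i
  rw [← mpProdVec_add, ← EReal.coe_toReal h1.1 h1.2, ← EReal.coe_toReal h2.1 h2.2] at h
  have h' : -negMinCoord (mpProdVec a m n 0) + (mpProdVec a (m + n) k 0 i).toReal ≤
    (mpProdVec a m (n + k) 0 i).toReal := by exact_mod_cast h
  linarith [neg_toReal_le_negMinCoord (mpProdVec a (m + n) k 0) i]

theorem maxCoord_add_negMinCoord_nonneg {d : ℕ} [NeZero d] (v : Fin d → EReal) :
    0 ≤ maxCoord v + negMinCoord v := by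
  have h1 := toReal_le_maxCoord v 0
  have h2 := neg_toReal_le_negMinCoord v 0
  linarith

theorem measurable_mpVec {d : ℕ} :
    Measurable fun p : (Fin d → Fin d → EReal) × (Fin d → EReal) => mpVec p.1 p.2 := by
  refine measurable_pi_lambda _ fun i => Measurable.iSup fun j => ?_
  exact ((measurable_pi_apply j).comp ((measurable_pi_apply i).comp measurable_fst)).add
    ((measurable_pi_apply j).comp measurable_snd)

theorem measurable_mpProdVec {d : ℕ} (m : ℤ) (n : ℕ) :
    Measurable fun a : ℤ → Fin d → Fin d → EReal => mpProdVec a m n 0 := by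
  induction n with
  | zero => exact measurable_const
  | succ n ih => exact measurable_mpVec.comp ((measurable_pi_apply (m + n)).prodMk ih)

theorem mpProdVec_seqShift {d : ℕ} (a : ℤ → Fin d → Fin d → EReal) (m : ℤ) (n : ℕ)
    (v : Fin d → EReal) : mpProdVec (seqShift a) m n v = mpProdVec a (m + 1) n v := by
  induction n with
  | zero => rfl
  | succ n ih =>
    rw [mpProdVec, mpProdVec, ih, seqShift, add_right_comm]

/-- The shift as a measurable equivalence. -/
def seqShiftEquiv (E : Type*) [MeasurableSpace E] : (ℤ → E) ≃ᵐ (ℤ → E) where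
  toFun := seqShift
  invFun a n := a (n - 1)
  left_inv a := by funext n; simp [seqShift]
  right_inv a := by funext n; simp [seqShift]
  measurable_toFun := measurable_pi_lambda _ fun n => measurable_pi_apply (n + 1)
  measurable_invFun := measurable_pi_lambda _ fun n => measurable_pi_apply (n - 1)

theorem mpProdVec_iterate_seqShift {d : ℕ} (a : ℤ → Fin d → Fin d → EReal) (m : ℤ) (k n : ℕ)
    (v : Fin d → EReal) : mpProdVec (seqShift^[k] a) m n v = mpProdVec a (m + k) n v := by
  induction k generalizing a with
  | zero => simp
  | succ k ih =>
    rw [Function.iterate_succ_apply, ih, mpProdVec_seqShift]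
    push_cast
    rw [add_assoc]

theorem mpProdVec_iterate_symm {d : ℕ} (a : ℤ → Fin d → Fin d → EReal) (m : ℤ) (k n : ℕ)
    (v : Fin d → EReal) :
    mpProdVec ((seqShiftEquiv (Fin d → Fin d → EReal)).symm^[k] a) m n v =
      mpProdVec a (m - k) n v := by
  have h : seqShift^[k] ((seqShiftEquiv (Fin d → Fin d → EReal)).symm^[k] a) = a :=
    Function.LeftInverse.iterate (seqShiftEquiv (Fin d → Fin d → EReal)).apply_symm_apply k a
  conv_rhs => rw [← h]
  rw [mpProdVec_iterate_seqShift, sub_add_cancel]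

/-- A family of random vectors, almost surely finite, whose largest coordinate is subadditive and
smallest coordinate superadditive over the ergodic transformation `S`. -/
structure IsTopicalProcess {α : Type*} [MeasurableSpace α] {d : ℕ} (μ : Measure α) (S : α → α)
    (F : ℕ → α → Fin d → EReal) : Prop where
  ergodic : Ergodic S μ
  measurable : ∀ n, Measurable (F n)
  zero : ∀ x, F 0 x = 0
  finite : ∀ᵐ x ∂μ, ∀ n i, F n x i ≠ ⊤ ∧ F n x i ≠ ⊥
  max_subadd : ∀ᵐ x ∂μ, ∀ m n,
    maxCoord (F (m + n) x) ≤ maxCoord (F m x) + maxCoord (F n (S^[m] x))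
  negMin_subadd : ∀ᵐ x ∂μ, ∀ m n,
    negMinCoord (F (m + n) x) ≤ negMinCoord (F m x) + negMinCoord (F n (S^[m] x))
  integrable_max : Integrable (fun x => maxCoord (F 1 x)) μ
  integrable_negMin : Integrable (fun x => negMinCoord (F 1 x)) μ

theorem ae_le_birkhoffSum_of_subadditive {α : Type*} [MeasurableSpace α] {μ : Measure α}
    {T : α → α} {g : ℕ → α → ℝ} (hg0 : ∀ x, g 0 x = 0)
    (hsub : ∀ᵐ x ∂μ, ∀ m n, g (m + n) x ≤ g m x + g n (T^[m] x)) :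
    ∀ᵐ x ∂μ, ∀ n, g n x ≤ birkhoffSum T (g 1) n x := by
  filter_upwards [hsub] with x hx n
  induction n with
  | zero => simp [hg0]
  | succ n ih =>
    rw [birkhoffSum_succ]
    linarith [hx n 1]

theorem integrable_of_subadditive {α : Type*} [MeasurableSpace α] {μ : Measure α}
    {T : α → α} (hT : MeasurePreserving T μ μ) {g l : ℕ → α → ℝ}
    (hg0 : ∀ x, g 0 x = 0) (hl0 : ∀ x, l 0 x = 0) (hgm : ∀ n, Measurable (g n))
    (hgsub : ∀ᵐ x ∂μ, ∀ m n, g (m + n) x ≤ g m x + g n (T^[m] x))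
    (hlsub : ∀ᵐ x ∂μ, ∀ m n, l (m + n) x ≤ l m x + l n (T^[m] x))
    (hgi : Integrable (g 1) μ) (hli : Integrable (l 1) μ) (hgl : ∀ n x, 0 ≤ g n x + l n x)
    (n : ℕ) : Integrable (g n) μ := by
  refine integrable_of_le_of_le (g₁ := fun x => -birkhoffSum T (l 1) n x)
    (g₂ := birkhoffSum T (g 1) n) (hgm n).aestronglyMeasurable ?_ ?_
    (integrable_birkhoffSum hT hli n).neg (integrable_birkhoffSum hT hgi n)
  · filter_upwards [ae_le_birkhoffSum_of_subadditive hl0 hlsub] with x hx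
    linarith [hx n, hgl n x]
  · filter_upwards [ae_le_birkhoffSum_of_subadditive hg0 hgsub] with x hx using hx n

theorem tendsto_iSup_div {ι : Type*} [Finite ι] [Nonempty ι] {u : ℕ → ι → ℝ} {γ : ℝ}
    (h : ∀ i, Tendsto (fun n : ℕ => u n i / n) atTop (𝓝 γ)) :
    Tendsto (fun n : ℕ => (⨆ i, u n i) / n) atTop (𝓝 γ) := by
  rw [tendsto_order]
  constructor
  · intro c hc
    obtain ⟨i⟩ := ‹Nonempty ι›
    filter_upwards [(h i).eventually_const_lt hc] with n hn
    refine hn.trans_le ?_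
    gcongr
    exact le_ciSup (Set.finite_range _).bddAbove i
  · intro c hc
    filter_upwards [eventually_all.2 fun i => (h i).eventually_lt_const hc] with n hn
    obtain ⟨i, hi⟩ := exists_eq_ciSup_of_finite (f := u n)
    rw [← hi]
    exact hn i

namespace IsTopicalProcess

variable {α : Type*} [MeasurableSpace α] {d : ℕ} {μ : Measure α}
  {S : α → α} {F : ℕ → α → Fin d → EReal}

theorem integrable_maxCoord [NeZero d] (hF : IsTopicalProcess μ S F) (n : ℕ) :
    Integrable (fun x => maxCoord (F n x)) μ :=
  integrable_of_subadditive hF.ergodic.toMeasurePreserving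
    (g := fun n x => maxCoord (F n x)) (l := fun n x => negMinCoord (F n x))
    (fun x => by rw [hF.zero, maxCoord_zero]) (fun x => by rw [hF.zero, negMinCoord_zero])
    (fun n => measurable_maxCoord.comp (hF.measurable n)) hF.max_subadd hF.negMin_subadd
    hF.integrable_max hF.integrable_negMin (fun n x => maxCoord_add_negMinCoord_nonneg _) n

theorem integrable_negMinCoord [NeZero d] (hF : IsTopicalProcess μ S F) (n : ℕ) :
    Integrable (fun x => negMinCoord (F n x)) μ :=
  integrable_of_subadditive hF.ergodic.toMeasurePreserving
    (g := fun n x => negMinCoord (F n x)) (l := fun n x => maxCoord (F n x))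
    (fun x => by rw [hF.zero, negMinCoord_zero]) (fun x => by rw [hF.zero, maxCoord_zero])
    (fun n => measurable_negMinCoord.comp (hF.measurable n)) hF.negMin_subadd hF.max_subadd
    hF.integrable_negMin hF.integrable_max
    (fun n x => by rw [add_comm]; exact maxCoord_add_negMinCoord_nonneg _) n

theorem ae_maxCoord_le (hF : IsTopicalProcess μ S F) :
    ∀ᵐ x ∂μ, ∀ n, maxCoord (F n x) ≤ birkhoffSum S (fun x => maxCoord (F 1 x)) n x :=
  ae_le_birkhoffSum_of_subadditive
    (g := fun n x => maxCoord (F n x)) (fun x => by rw [hF.zero, maxCoord_zero]) hF.max_subadd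

theorem ae_negMinCoord_le (hF : IsTopicalProcess μ S F) :
    ∀ᵐ x ∂μ, ∀ n, negMinCoord (F n x) ≤ birkhoffSum S (fun x => negMinCoord (F 1 x)) n x :=
  ae_le_birkhoffSum_of_subadditive
    (g := fun n x => negMinCoord (F n x)) (fun x => by rw [hF.zero, negMinCoord_zero])
    hF.negMin_subadd

theorem ae_coe_toReal_div (hF : IsTopicalProcess μ S F) :
    ∀ᵐ x ∂μ, ∀ (n : ℕ) i, F n x i / (n : EReal) = (((F n x i).toReal / n : ℝ) : EReal) := by
  filter_upwards [hF.finite] with x hx n i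
  conv_lhs => rw [← EReal.coe_toReal (hx n i).1 (hx n i).2]
  rfl

/-- A growth rate of a topical process is a real number. -/
theorem exists_coe_eq [NeZero d] [IsProbabilityMeasure μ] (hF : IsTopicalProcess μ S F) {γ : EReal}
    (hγ : ∀ᵐ x ∂μ, ∀ i, Tendsto (fun n : ℕ => F n x i / (n : EReal)) atTop (𝓝 γ)) :
    ∃ r : ℝ, (r : EReal) = γ := by
  have hb1 := ae_tendsto_birkhoffSum_div hF.ergodic
    (measurable_maxCoord.comp (hF.measurable 1)) hF.integrable_max
  have hb2 := ae_tendsto_birkhoffSum_div hF.ergodic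
    (measurable_negMinCoord.comp (hF.measurable 1)) hF.integrable_negMin
  obtain ⟨x, hx, hx1, hx2, hm1, hm2, hcoe⟩ := (hγ.and (hb1.and (hb2.and (hF.ae_maxCoord_le.and
    (hF.ae_negMinCoord_le.and hF.ae_coe_toReal_div))))).exists
  have hx0 := hx 0
  simp only [hcoe] at hx0
  have hup : γ ≤ ((∫ x, maxCoord (F 1 x) ∂μ : ℝ) : EReal) := by
    refine le_of_tendsto_of_tendsto' hx0 ((continuous_coe_real_ereal.tendsto _).comp hx1)
      fun n => EReal.coe_le_coe_iff.2 ?_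
    exact div_le_div_of_nonneg_right ((toReal_le_maxCoord _ 0).trans (hm1 n)) n.cast_nonneg
  have hlow : ((-∫ x, negMinCoord (F 1 x) ∂μ : ℝ) : EReal) ≤ γ := by
    refine le_of_tendsto_of_tendsto' ((continuous_coe_real_ereal.tendsto _).comp hx2.neg) hx0
      fun n => EReal.coe_le_coe_iff.2 ?_
    have h := div_le_div_of_nonneg_right
      ((neg_toReal_le_negMinCoord (F n x) 0).trans (hm2 n)) (n.cast_nonneg (α := ℝ))
    rw [neg_div] at h
    exact neg_le.1 h
  exact ⟨γ.toReal, EReal.coe_toReal (ne_top_of_le_ne_top (EReal.coe_ne_top _) hup)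
    (ne_bot_of_le_ne_bot (EReal.coe_ne_bot _) hlow)⟩

/-- If a topical process over `S` has at each time the law of a topical process over `S'` whose
coordinates all grow at rate `γ`, then its coordinates all grow at rate `γ`. -/
theorem ae_tendsto_div [NeZero d] [IsProbabilityMeasure μ] {S' : α → α} {F' : ℕ → α → Fin d → EReal}
    (hF : IsTopicalProcess μ S F) (hF' : IsTopicalProcess μ S' F')
    (heq : ∀ n x, F n x = F' n (S^[n] x)) {γ : EReal}
    (hγ : ∀ᵐ x ∂μ, ∀ i, Tendsto (fun n : ℕ => F' n x i / (n : EReal)) atTop (𝓝 γ)) :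
    ∀ᵐ x ∂μ, ∀ i, Tendsto (fun n : ℕ => F n x i / (n : EReal)) atTop (𝓝 γ) := by
  obtain ⟨γ, rfl⟩ := hF'.exists_coe_eq hγ
  have hreal : ∀ᵐ x ∂μ, ∀ i, Tendsto (fun n : ℕ => (F' n x i).toReal / n) atTop (𝓝 γ) := by
    filter_upwards [hγ, hF'.ae_coe_toReal_div] with x hx hcoe i
    have := hx i
    simp only [hcoe] at this
    exact EReal.tendsto_coe.1 this
  have hmax : ∀ᵐ x ∂μ, Tendsto (fun n : ℕ => maxCoord (F' n x) / n) atTop (𝓝 γ) := by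
    filter_upwards [hreal] with x hx using tendsto_iSup_div hx
  have hneg : ∀ᵐ x ∂μ, Tendsto (fun n : ℕ => negMinCoord (F' n x) / n) atTop (𝓝 (-γ)) := by
    filter_upwards [hreal] with x hx
    refine tendsto_iSup_div fun i => ?_
    simpa only [neg_div] using (hx i).neg
  have hint : ∀ (f : (Fin d → EReal) → ℝ), Measurable f → ∀ n,
      ∫ x, f (F n x) ∂μ = ∫ x, f (F' n x) ∂μ := by
    intro f hf n
    have hSn := hF.ergodic.toMeasurePreserving.iterate n
    have := integral_map (μ := μ) hSn.measurable.aemeasurable (f := fun x => f (F' n x))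
      (hf.comp (hF'.measurable n)).aestronglyMeasurable
    rw [hSn.map_eq] at this
    simp only [heq, this]
  have hU := ae_forall_eventually_div_lt hF.ergodic hF'.ergodic (g := fun n x => maxCoord (F n x))
    (fun x => by rw [hF.zero, maxCoord_zero])
    (fun n => measurable_maxCoord.comp (hF.measurable n)) hF.integrable_maxCoord hF.max_subadd
    hF'.integrable_maxCoord (hint _ measurable_maxCoord)
    (measurable_maxCoord.comp (hF'.measurable 1)) hF'.integrable_max hF'.ae_maxCoord_le hmax
  have hL := ae_forall_eventually_div_lt hF.ergodic hF'.ergodic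
    (g := fun n x => negMinCoord (F n x)) (fun x => by rw [hF.zero, negMinCoord_zero])
    (fun n => measurable_negMinCoord.comp (hF.measurable n)) hF.integrable_negMinCoord
    hF.negMin_subadd hF'.integrable_negMinCoord (hint _ measurable_negMinCoord)
    (measurable_negMinCoord.comp (hF'.measurable 1)) hF'.integrable_negMin hF'.ae_negMinCoord_le
    hneg
  filter_upwards [hU, hL, hF.ae_coe_toReal_div] with x hxU hxL hcoe i
  simp only [hcoe]
  refine EReal.tendsto_coe.2 (tendsto_order.2 ⟨fun c hc => ?_, fun c hc => ?_⟩)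
  · filter_upwards [hxL (-c) (neg_lt_neg hc)] with n hn
    have : -(F n x i).toReal / n ≤ negMinCoord (F n x) / n := by
      gcongr
      exact neg_toReal_le_negMinCoord _ i
    rw [neg_div] at this
    linarith
  · filter_upwards [hxU c hc] with n hn
    refine lt_of_le_of_lt ?_ hn
    gcongr
    exact toReal_le_maxCoord _ i

end IsTopicalProcess

theorem integrable_iSup_of_finite {α ι : Type*} [MeasurableSpace α] {μ : Measure α} [Fintype ι]
    [Nonempty ι] {f : ι → α → ℝ} (hm : ∀ i, Measurable (f i)) (hi : ∀ i, Integrable (f i) μ) :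
    Integrable (fun x => ⨆ i, f i x) μ := by
  refine (integrable_finsetSum Finset.univ fun i _ => (hi i).abs).mono'
    (Measurable.iSup hm).aestronglyMeasurable (Eventually.of_forall fun x => ?_)
  obtain ⟨i, h⟩ := exists_eq_ciSup_of_finite (f := fun i => f i x)
  rw [← h, Real.norm_eq_abs]
  exact Finset.single_le_sum (f := fun i => |f i x|) (fun i _ => abs_nonneg _) (Finset.mem_univ i)

theorem isTopicalProcess_xVec {d : ℕ} [NeZero d] {ν : Measure (ℤ → Fin d → Fin d → EReal)}
    (hν : Ergodic seqShift ν) (hfin : ∀ᵐ a ∂ν, RowFinite a)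
    (hint : ∀ i, Integrable (fun a : ℤ → Fin d → Fin d → EReal => (mpVec (a 0) 0 i).toReal) ν) :
    IsTopicalProcess ν seqShift fun n a => xVec a n where
  ergodic := hν
  measurable := measurable_mpProdVec 0
  zero a := rfl
  finite := hfin.mono fun a ha n i => ha.mpProdVec_ne 0 n i
  max_subadd := hfin.mono fun a ha m n => by
    simpa only [xVec, mpProdVec_iterate_seqShift] using ha.maxCoord_add_le 0 m n
  negMin_subadd := hfin.mono fun a ha m n => by
    simpa only [xVec, mpProdVec_iterate_seqShift] using ha.negMinCoord_add_le 0 m n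
  integrable_max := integrable_iSup_of_finite
    (fun i => ((measurable_pi_apply i).comp (measurable_mpProdVec 0 1)).ereal_toReal)
    fun i => hint i
  integrable_negMin := integrable_iSup_of_finite
    (fun i => ((measurable_pi_apply i).comp (measurable_mpProdVec 0 1)).ereal_toReal.neg)
    fun i => (hint i).neg

theorem yVec_eq_xVec {d : ℕ} (a : ℤ → Fin d → Fin d → EReal) (n : ℕ) :
    yVec a n = xVec ((seqShiftEquiv (Fin d → Fin d → EReal)).symm^[n] a) n := by
  rw [xVec, mpProdVec_iterate_symm, zero_sub, yVec]

theorem xVec_eq_yVec {d : ℕ} (a : ℤ → Fin d → Fin d → EReal) (n : ℕ) :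
    xVec a n = yVec (seqShift^[n] a) n := by
  rw [yVec, mpProdVec_iterate_seqShift, neg_add_cancel, xVec]

theorem isTopicalProcess_yVec {d : ℕ} [NeZero d] {ν : Measure (ℤ → Fin d → Fin d → EReal)}
    (hν : Ergodic seqShift ν) (hfin : ∀ᵐ a ∂ν, RowFinite a)
    (hint : ∀ i, Integrable (fun a : ℤ → Fin d → Fin d → EReal => (mpVec (a 0) 0 i).toReal) ν) :
    IsTopicalProcess ν (seqShiftEquiv (Fin d → Fin d → EReal)).symm fun n a => yVec a n := by
  have herg : Ergodic (seqShiftEquiv (Fin d → Fin d → EReal)).symm ν :=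
    Ergodic.symm (e := seqShiftEquiv (Fin d → Fin d → EReal)) hν
  have hx := isTopicalProcess_xVec hν hfin hint
  have hmp := herg.toMeasurePreserving
  have hadd : ∀ m n : ℕ, -((m : ℤ) + n) + n = -m := fun m n => by ring
  refine ⟨herg, fun n => measurable_mpProdVec _ n, fun a => rfl,
    hfin.mono fun a ha n i => ha.mpProdVec_ne _ n i,
    hfin.mono fun a ha m n => ?_, hfin.mono fun a ha m n => ?_, ?_, ?_⟩
  · have h := ha.maxCoord_add_le (-((m : ℤ) + n)) n m
    rw [hadd] at h
    simp only [yVec, mpProdVec_iterate_symm]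
    rw [add_comm m n, Nat.cast_add, add_comm (n : ℤ), show -(n : ℤ) - m = -(m + n) by ring]
    linarith
  · have h := ha.negMinCoord_add_le (-((m : ℤ) + n)) n m
    rw [hadd] at h
    simp only [yVec, mpProdVec_iterate_symm]
    rw [add_comm m n, Nat.cast_add, add_comm (n : ℤ), show -(n : ℤ) - m = -(m + n) by ring]
    linarith
  · simp only [yVec_eq_xVec]
    exact hmp.integrable_comp_of_integrable hx.integrable_max
  · simp only [yVec_eq_xVec]
    exact hmp.integrable_comp_of_integrable hx.integrable_negMin

theorem measurableSet_forall_tendsto_div {α : Type*} [MeasurableSpace α] {d : ℕ}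
    {F : ℕ → α → Fin d → EReal} (hF : ∀ n, Measurable (F n)) (γ : EReal) :
    MeasurableSet {x | ∀ i, Tendsto (fun n : ℕ => F n x i / (n : EReal)) atTop (𝓝 γ)} := by
  simp only [Set.ofPred_forall]
  refine MeasurableSet.iInter fun i => measurableSet_tendsto (𝓝 γ) fun n => ?_
  have hi : Measurable fun x => F n x i := (measurable_pi_apply i).comp (hF n)
  exact hi.mul_const _

theorem measurableSet_rowFinite {d : ℕ} :
    MeasurableSet {a : ℤ → Fin d → Fin d → EReal | RowFinite a} := by
  have hm : ∀ n i j, Measurable fun a : ℤ → Fin d → Fin d → EReal => a n i j := fun n i j =>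
    (measurable_pi_apply j).comp ((measurable_pi_apply i).comp (measurable_pi_apply n))
  simp only [RowFinite, Set.ofPred_forall, Set.ofPred_and, Set.ofPred_exists]
  refine .iInter fun n => .iInter fun i => .inter (.iInter fun j => ?_) (.iUnion fun j => ?_)
  · exact (hm n i j) (measurableSet_singleton ⊤).compl
  · exact (hm n i j) (measurableSet_singleton ⊥).compl

end

theorem x_tendsto_iff_y_tendsto
    {d : ℕ} {Ω : Type*} [MeasurableSpace Ω] (μ : Measure Ω) [IsProbabilityMeasure μ]
    (A : ℤ → Ω → Fin d → Fin d → EReal)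
    (hA : IsStationaryErgodic A μ)
    (hRmax : ∀ n ω i j, A n ω i j ≠ ⊤)
    (hrow : ∀ n, ∀ᵐ ω ∂μ, ∀ i, ∃ j, A n ω i j ≠ ⊥)
    (hint : ∀ i, Integrable (fun ω => (mpVec (A 0 ω) 0 i).toReal) μ)
    (γ : EReal)
    (hγ : ∀ᵐ ω ∂μ, Tendsto (fun n : ℕ => (⨆ i, xVec (fun k => A k ω) n i) / (n : EReal))
      atTop (𝓝 γ)) :
    (∀ᵐ ω ∂μ, ∀ i, Tendsto (fun n : ℕ => xVec (fun k => A k ω) n i / (n : EReal))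
        atTop (𝓝 γ)) ↔
    (∀ᵐ ω ∂μ, ∀ i, Tendsto (fun n : ℕ => yVec (fun k => A k ω) n i / (n : EReal))
        atTop (𝓝 γ)) := by
  rcases Nat.eq_zero_or_pos d with rfl | hd
  · simp
  have : NeZero d := ⟨hd.ne'⟩
  have hm : Measurable fun ω n => A n ω := measurable_pi_lambda _ hA.measurable
  set ν := μ.map fun ω n => A n ω with hν
  have : IsProbabilityMeasure ν := Measure.isProbabilityMeasure_map hm.aemeasurable
  have hfin : ∀ᵐ a ∂ν, RowFinite a := by
    rw [hν, ae_map_iff hm.aemeasurable measurableSet_rowFinite]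
    filter_upwards [ae_all_iff.2 hrow] with ω hω n i
    exact ⟨hRmax n ω i, hω n i⟩
  have hint' : ∀ i, Integrable
      (fun a : ℤ → Fin d → Fin d → EReal => (mpVec (a 0) 0 i).toReal) ν := fun i =>
    (integrable_map_measure (((measurable_pi_apply i).comp
      (measurable_mpProdVec 0 1)).ereal_toReal).aestronglyMeasurable hm.aemeasurable).2 (hint i)
  have hx := isTopicalProcess_xVec hA.ergodic hfin hint'
  have hy := isTopicalProcess_yVec hA.ergodic hfin hint'
  have hxm := measurableSet_forall_tendsto_div hx.measurable γ
  have hym := measurableSet_forall_tendsto_div hy.measurable γ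
  rw [← ae_map_iff hm.aemeasurable hxm, ← ae_map_iff hm.aemeasurable hym]
  exact ⟨fun h => hy.ae_tendsto_div hx (fun n a => yVec_eq_xVec a n) h,
    fun h => hx.ae_tendsto_div hy (fun n a => xVec_eq_yVec a n) h⟩
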